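/- Let φ = (1+√5)/2 and u = √(φ² + 1) − φ. Then (1 − φ⁵·u⁵)/(φ⁵ + u⁵) = 3·(√(φ² + 1) − 1) − φ². -/

import Mathlib

/-!
Both sides lie in the quartic extension generated by `φ` and `s = √(φ² + 1)`, where `φ² = φ + 1`
and hence `s² = φ + 2`. Reducing the fifth powers to the basis `1, φ, s, φ s` turns the claim,
once the denominator is cleared, into an identity that holds in every commutative ring.

The cleared identity also shows that the denominator does not vanish: if `φ⁵ + u⁵ = 0`, then
`1 - φ⁵ u⁵ = 0`, so `φ¹⁰ + 1 = 0`. But `φ¹⁰ + 1 = 5 (2 φ - 1) φ⁵`, where `(2 φ - 1)² = 5` and `φ`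
is a unit, so this is nonzero away from characteristic `5`.
-/

theorem pow_succ_eq_fib_mul_add_fib {R : Type*} [CommSemiring R] {φ : R} (hφ : φ ^ 2 = φ + 1)
    (n : ℕ) : φ ^ (n + 1) = Nat.fib (n + 1) * φ + Nat.fib n := by
  induction n with
  | zero => simp
  | succ n ih =>
    calc φ ^ (n + 2) = Nat.fib (n + 1) * φ ^ 2 + Nat.fib n * φ := by rw [pow_succ, ih]; ring
      _ = Nat.fib (n + 2) * φ + Nat.fib (n + 1) := by
        rw [hφ, Nat.fib_add_two]; push_cast; ring

theorem pow_five_of_sq_eq_add_one {R : Type*} [CommSemiring R] {φ : R} (hφ : φ ^ 2 = φ + 1) :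
    φ ^ 5 = 5 * φ + 3 := by
  simpa [Nat.fib_add_two] using pow_succ_eq_fib_mul_add_fib hφ 4

section CommRing

variable {R : Type*} [CommRing R] {φ s : R}

theorem two_mul_sub_one_sq_of_sq_eq_add_one (hφ : φ ^ 2 = φ + 1) : (2 * φ - 1) ^ 2 = 5 := by
  linear_combination 4 * hφ

theorem pow_ten_add_one_of_sq_eq_add_one (hφ : φ ^ 2 = φ + 1) :
    φ ^ 10 + 1 = 5 * (2 * φ - 1) * φ ^ 5 := by
  have pow_ten : φ ^ 10 = 55 * φ + 34 := by
    simpa [Nat.fib_add_two] using pow_succ_eq_fib_mul_add_fib hφ 9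
  rw [pow_ten, pow_five_of_sq_eq_add_one hφ]
  linear_combination -50 * hφ

-- With `a = sinh x` and `s = cosh x`, this is `exp (-5 x) = cosh (5 x) - sinh (5 x)`.
theorem sub_pow_five_of_sq_eq_sq_add_one {a : R} (hs : s ^ 2 = a ^ 2 + 1) :
    (s - a) ^ 5 = (16 * a ^ 4 + 12 * a ^ 2 + 1) * s - (16 * a ^ 5 + 20 * a ^ 3 + 5 * a) := by
  linear_combination
    (s ^ 3 - 5 * a * s ^ 2 + (11 * a ^ 2 + 1) * s - (15 * a ^ 3 + 5 * a)) * hs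

theorem sub_pow_five_of_sq_eq_add_one (hφ : φ ^ 2 = φ + 1) (hs : s ^ 2 = φ ^ 2 + 1) :
    (s - φ) ^ 5 = (60 * φ + 45) * s - (125 * φ + 68) := by
  have pow_three : φ ^ 3 = 2 * φ + 1 := by
    simpa [Nat.fib_add_two] using pow_succ_eq_fib_mul_add_fib hφ 2
  have pow_four : φ ^ 4 = 3 * φ + 2 := by
    simpa [Nat.fib_add_two] using pow_succ_eq_fib_mul_add_fib hφ 3
  rw [sub_pow_five_of_sq_eq_sq_add_one hs, hφ, pow_three, pow_four, pow_five_of_sq_eq_add_one hφ]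
  ring

theorem one_sub_pow_five_mul_sub_pow_five (hφ : φ ^ 2 = φ + 1) (hs : s ^ 2 = φ ^ 2 + 1) :
    1 - φ ^ 5 * (s - φ) ^ 5 = (3 * (s - 1) - φ ^ 2) * (φ ^ 5 + (s - φ) ^ 5) := by
  have s_sq : s ^ 2 = φ + 2 := by linear_combination hs + hφ
  rw [pow_five_of_sq_eq_add_one hφ, sub_pow_five_of_sq_eq_add_one hφ hs, hφ]
  calc 1 - (5 * φ + 3) * ((60 * φ + 45) * s - (125 * φ + 68))
      = 1340 * φ + 830 - (705 * φ + 435) * s := by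
        linear_combination (625 - 300 * s) * hφ
    _ = (3 * (s - 1) - (φ + 1)) * (5 * φ + 3 + ((60 * φ + 45) * s - (125 * φ + 68))) := by
        linear_combination (60 * s - 300) * hφ - (180 * φ + 135) * s_sq

end CommRing

section Field

variable {K : Type*} [Field K] {φ s : K}

theorem pow_ten_add_one_ne_zero_of_sq_eq_add_one (h5 : (5 : K) ≠ 0) (hφ : φ ^ 2 = φ + 1) :
    φ ^ 10 + 1 ≠ 0 := by
  have φ_ne_zero : φ ≠ 0 := by
    rintro rfl
    simp at hφ
  have two_mul_sub_one_ne_zero : 2 * φ - 1 ≠ 0 :=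
    ne_zero_pow two_ne_zero (two_mul_sub_one_sq_of_sq_eq_add_one hφ ▸ h5)
  rw [pow_ten_add_one_of_sq_eq_add_one hφ]
  exact mul_ne_zero (mul_ne_zero h5 two_mul_sub_one_ne_zero) (pow_ne_zero 5 φ_ne_zero)

theorem pow_five_add_sub_pow_five_ne_zero (h5 : (5 : K) ≠ 0) (hφ : φ ^ 2 = φ + 1)
    (hs : s ^ 2 = φ ^ 2 + 1) : φ ^ 5 + (s - φ) ^ 5 ≠ 0 := by
  intro sum_eq_zero
  have one_sub_eq_zero : 1 - φ ^ 5 * (s - φ) ^ 5 = 0 := by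
    rw [one_sub_pow_five_mul_sub_pow_five hφ hs, sum_eq_zero, mul_zero]
  apply pow_ten_add_one_ne_zero_of_sq_eq_add_one h5 hφ
  linear_combination one_sub_eq_zero + φ ^ 5 * sum_eq_zero

theorem stmt_8_general (h5 : (5 : K) ≠ 0) (hφ : φ ^ 2 = φ + 1) (hs : s ^ 2 = φ ^ 2 + 1) :
    (1 - φ ^ 5 * (s - φ) ^ 5) / (φ ^ 5 + (s - φ) ^ 5) = 3 * (s - 1) - φ ^ 2 :=
  (div_eq_iff (pow_five_add_sub_pow_five_ne_zero h5 hφ hs)).2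
    (one_sub_pow_five_mul_sub_pow_five hφ hs)

end Field

theorem stmt_8 :
    let φ : ℝ := (1 + Real.sqrt 5) / 2
    let u : ℝ := Real.sqrt (φ ^ 2 + 1) - φ
    (1 - φ ^ 5 * u ^ 5) / (φ ^ 5 + u ^ 5) = 3 * (Real.sqrt (φ ^ 2 + 1) - 1) - φ ^ 2 := by
  intro φ _
  exact stmt_8_general (by norm_num) Real.goldenRatio_sq (Real.sq_sqrt (by positivity))
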